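/- Let a, b satisfy either a, b \in (-1,\infty) with ab > 0, or a, b \in \mathbb{C} \setminus \{0\} with b = \overline{a}; let c be a positive real number with c > \mathrm{Re}(a+b) + 2, and let \alpha \in \mathbb{C} with |\alpha| < 1. If |\alpha| \cdot \frac{\Gamma(c)\Gamma(c-a-b)}{\Gamma(c-a)\Gamma(c-b)} \left[\frac{2(a)_2 (b)_2}{(c-a-b-2)_2} + \frac{5ab}{c-a-b-1} + 1\right] \leq 2 (this quantity being a positive real number), then the Taylor coefficients b_n = \frac{\alpha}{2} \frac{(a)_{n-1}(b)_{n-1}}{(c)_{n-1}(n-1)!} of g_1(z) = (\alpha/2)\, z\, F(a,b;c;z) satisfy \sum_{n=1}^{\infty} n(2n-1)|b_n| \leq 1; consequently f_1(z) = z + \overline{(\alpha/2)\, z\, F(a,b;c;z)} is uniformly convex in \mathbb{D}. -/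

import Mathlib

open Complex Metric ComplexConjugate

noncomputable section

/-- The Pochhammer symbol `(x)ₙ = x(x+1)⋯(x+n-1)` for `x : ℂ`. -/
def poch (x : ℂ) (n : ℕ) : ℂ := (ascPochhammer ℂ n).eval x

/-- The Gaussian hypergeometric function `F(a,b;c;z) = ∑ (a)ₙ(b)ₙ/((c)ₙ n!) zⁿ`. -/
def hypF (a b c z : ℂ) : ℂ :=
  ∑' n : ℕ, poch a n * poch b n / (poch c n * (Nat.factorial n : ℂ)) * z ^ n

/-- The necessary and sufficient condition (due to Kanas–Ponnusamy–Sairam) for a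
sense-preserving harmonic mapping `f = h + conj g` to be uniformly convex in the unit
disk, taken here as the formal definition of "uniformly convex in `𝔻`". -/
def UniformlyConvexOnDisk (h g : ℂ → ℂ) : Prop :=
  ∀ z ∈ ball (0:ℂ) 1, ∀ ζ ∈ ball (0:ℂ) 1, z ≠ ζ →
    0 ≤ (((z - ζ) * deriv h z + (z - ζ) ^ 2 * deriv (deriv h) z
          + conj ((z - ζ) * deriv g z) + conj ((z - ζ) ^ 2 * deriv (deriv g) z))
        / ((z - ζ) * deriv h z - conj ((z - ζ) * deriv g z))).re

/-- The Taylor coefficient `b_{n+1} = (α/2) (a)ₙ(b)ₙ/((c)ₙ n!)` of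
`g₁(z) = (α/2) z F(a,b;c;z)`. -/
def bc1 (a b c α : ℂ) (n : ℕ) : ℂ :=
  α / 2 * (poch a n * poch b n) / (poch c n * (Nat.factorial n : ℂ))

/-!
The contiguous relation between `F(a,b;c;1)` and `F(a,b;c+1;1)` comes from a telescoping sum.
Iterating it to `F(a,b;c+N;1) → 1` leaves a quotient of Pochhammer symbols whose limit is given by
Euler's product for `Γ`: this is Gauss's theorem. Since `(n + 1) A_{n+1}(a,b,c)` is `ab/c` times
`A_n(a+1,b+1,c+1)`, the factorial moments of the coefficients `A_n` are again Gauss values, and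
`(n + 1)(2n + 1) = 2n(n - 1) + 5n + 1` turns them into the bracket of the hypothesis. The `A_n` are
nonnegative, so the bracket is exactly `∑ n(2n - 1)|b_n|`, up to the factor `|α| Γ…/2`.

For uniform convexity, `Re (x / y) ≥ 0` as soon as `|x - y| ≤ |x + y|`; as `|z - ζ| ≤ 2`, this
reduces to `|deriv g| + 2|deriv (deriv g)| ≤ 1`, which the coefficient condition implies.
-/

open Filter Topology

section Pochhammer

lemma poch_zero (x : ℂ) : poch x 0 = 1 := by
  simp [poch]

lemma poch_succ (x : ℂ) (n : ℕ) : poch x (n + 1) = poch x n * (x + n) :=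
  ascPochhammer_succ_eval n x

lemma poch_succ_left (x : ℂ) (n : ℕ) : poch x (n + 1) = x * poch (x + 1) n := by
  simp [poch, ascPochhammer_succ_left]

lemma poch_eq_prod_range (x : ℂ) (n : ℕ) : poch x n = ∏ k ∈ Finset.range n, (x + k) := by
  induction n with
  | zero => simp [poch_zero]
  | succ n ih => rw [poch_succ, ih, Finset.prod_range_succ]

lemma mul_poch_add_one (x : ℂ) (n : ℕ) : x * poch (x + 1) n = poch x n * (x + n) := by
  rw [← poch_succ_left, poch_succ]

lemma poch_eq_zero_iff {x : ℂ} {n : ℕ} : poch x n = 0 ↔ ∃ k < n, (k : ℂ) = -x :=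
  ascPochhammer_eval_eq_zero_iff n x

lemma poch_ne_zero {x : ℂ} (hx : ∀ k : ℕ, x ≠ -k) (n : ℕ) : poch x n ≠ 0 := fun h =>
  let ⟨k, _, hk⟩ := poch_eq_zero_iff.1 h
  hx k (by rw [hk, neg_neg])

lemma ne_neg_natCast_of_re_pos {x : ℂ} (hx : 0 < x.re) (k : ℕ) : x ≠ -k := by
  rintro rfl
  simp only [neg_re, natCast_re] at hx
  linarith [k.cast_nonneg (α := ℝ)]

lemma add_natCast_ne_neg_natCast {x : ℂ} (hx : ∀ k : ℕ, x ≠ -k) (m k : ℕ) : x + m ≠ -k := by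
  intro h
  exact hx (m + k) (by push_cast; linear_combination h)

lemma add_natCast_ne_zero {x : ℂ} (hx : ∀ k : ℕ, x ≠ -k) (k : ℕ) : x + k ≠ 0 := by
  simpa using add_natCast_ne_neg_natCast hx k 0

lemma inv_GammaSeq (x : ℂ) (n : ℕ) :
    (GammaSeq x n)⁻¹ = poch x (n + 1) / (n ^ x * n.factorial) := by
  rw [GammaSeq, ← poch_eq_prod_range, inv_div]

-- At a pole `Gamma x` is the junk value `0`, and the quotient vanishes for large `n`.
lemma tendsto_poch_div_cpow_mul_factorial (x : ℂ) :
    Tendsto (fun n : ℕ => poch x (n + 1) / (n ^ x * n.factorial)) atTop (𝓝 (Gamma x)⁻¹) := by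
  by_cases hx : ∃ m : ℕ, x = -m
  · obtain ⟨m, rfl⟩ := hx
    rw [Gamma_neg_nat_eq_zero, inv_zero]
    refine tendsto_const_nhds.congr' ?_
    filter_upwards [eventually_ge_atTop m] with n hn
    rw [poch_eq_zero_iff.2 ⟨m, by lia, (neg_neg _).symm⟩, zero_div]
  · push Not at hx
    simpa only [inv_GammaSeq] using (GammaSeq_tendsto_Gamma x).inv₀ (Gamma_ne_zero hx)

end Pochhammer

section GaussSummation

/-- The coefficients `(a)ₙ(b)ₙ/((c)ₙ n!)` of `F(a,b;c;z)`, written as in `hypF`. -/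
def hypCoeff (a b c : ℂ) (n : ℕ) : ℂ :=
  poch a n * poch b n / (poch c n * n.factorial)

/-- The value `Γ(c)Γ(c-a-b)/(Γ(c-a)Γ(c-b))` of `F(a,b;c;1)` in Gauss's theorem. Mathlib's `Gamma`
is `0` at its poles, so the quotient is `0` where `1/Γ(c-a)` or `1/Γ(c-b)` vanishes, as it should
be. -/
def gaussValue (a b c : ℂ) : ℂ :=
  Gamma c * Gamma (c - a - b) / (Gamma (c - a) * Gamma (c - b))

variable {a b c : ℂ}

lemma hypCoeff_succ (hc : ∀ k : ℕ, c ≠ -k) (n : ℕ) :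
    (n + 1) * hypCoeff a b c (n + 1) = (a + n) * (b + n) / (c + n) * hypCoeff a b c n := by
  have hcn := add_natCast_ne_zero hc n
  have hpoch := poch_ne_zero hc n
  have hn : (n + 1 : ℂ) ≠ 0 := n.cast_add_one_ne_zero
  simp only [hypCoeff, poch_succ, Nat.factorial_succ]
  push_cast
  field_simp

lemma succ_mul_hypCoeff_succ (a b c : ℂ) (n : ℕ) :
    (n + 1) * hypCoeff a b c (n + 1) = a * b / c * hypCoeff (a + 1) (b + 1) (c + 1) n := by
  have hn : (n + 1 : ℂ) ≠ 0 := n.cast_add_one_ne_zero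
  simp only [hypCoeff, poch_succ_left, Nat.factorial_succ]
  push_cast
  field_simp

lemma hypCoeff_add_one_right (hc : ∀ k : ℕ, c ≠ -k) (n : ℕ) :
    hypCoeff a b (c + 1) n = c / (c + n) * hypCoeff a b c n := by
  have hc₀ : c ≠ 0 := by simpa using hc 0
  have hcn := add_natCast_ne_zero hc n
  have hpoch := poch_ne_zero hc n
  have hshift : poch (c + 1) n = poch c n * (c + n) / c := by
    rw [eq_div_iff hc₀, mul_comm, mul_poch_add_one]
  rw [hypCoeff, hypCoeff, hshift]
  field_simp

lemma tendsto_cpow_mul_hypCoeff_succ (a b : ℂ) (hc : ∀ k : ℕ, c ≠ -k) :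
    Tendsto (fun n : ℕ => (n : ℂ) ^ (c - a - b) * ((n + 1) * hypCoeff a b c (n + 1))) atTop
      (𝓝 ((Gamma a)⁻¹ * (Gamma b)⁻¹ / (Gamma c)⁻¹)) := by
  refine (((tendsto_poch_div_cpow_mul_factorial a).mul
    (tendsto_poch_div_cpow_mul_factorial b)).div (tendsto_poch_div_cpow_mul_factorial c)
    (inv_ne_zero (Gamma_ne_zero hc))).congr' ?_
  filter_upwards [eventually_ne_atTop 0] with n hn
  have hn₀ : (n : ℂ) ≠ 0 := Nat.cast_ne_zero.2 hn
  have hpow (x : ℂ) : (n : ℂ) ^ x ≠ 0 := by simp [cpow_eq_zero_iff, hn₀]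
  have ha := hpow a
  have hb := hpow b
  have hc' := hpow c
  have hpoch := poch_ne_zero hc (n + 1)
  have hn₁ : (n + 1 : ℂ) ≠ 0 := n.cast_add_one_ne_zero
  have hfac : (n.factorial : ℂ) ≠ 0 := Nat.cast_ne_zero.2 n.factorial_ne_zero
  rw [Pi.div_apply, cpow_sub _ _ hn₀, cpow_sub _ _ hn₀, hypCoeff, Nat.factorial_succ]
  push_cast
  field_simp

lemma isBigO_succ_mul_hypCoeff_succ (a b : ℂ) (hc : ∀ k : ℕ, c ≠ -k) :
    (fun n : ℕ => (n + 1) * hypCoeff a b c (n + 1)) =O[atTop]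
      fun n : ℕ => (n : ℝ) ^ (-(c - a - b).re) := by
  have hinv : (fun n : ℕ => (n : ℂ) ^ (-(c - a - b))) =O[atTop]
      fun n : ℕ => (n : ℝ) ^ (-(c - a - b).re) := by
    refine Asymptotics.IsBigO.of_norm_eventuallyLE ?_
    filter_upwards [eventually_gt_atTop 0] with n hn
    rw [norm_natCast_cpow_of_pos hn, neg_re]
  refine (hinv.mul ((tendsto_cpow_mul_hypCoeff_succ a b hc).isBigO_one ℝ)).congr' ?_ ?_
  · filter_upwards [eventually_ne_atTop 0] with n hn
    have hn₀ : (n : ℂ) ≠ 0 := Nat.cast_ne_zero.2 hn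
    rw [← mul_assoc, ← cpow_add _ _ hn₀, neg_add_cancel, cpow_zero, one_mul]
  · simp

lemma summable_hypCoeff (hc : ∀ k : ℕ, c ≠ -k) (h : 0 < (c - a - b).re) :
    Summable (hypCoeff a b c) := by
  rw [← summable_nat_add_iff 1]
  have hinv : (fun n : ℕ => ((n : ℂ) + 1)⁻¹) =O[atTop] fun n : ℕ => (n : ℝ)⁻¹ := by
    refine Asymptotics.IsBigO.of_norm_eventuallyLE ?_
    filter_upwards [eventually_gt_atTop 0] with n hn
    rw [norm_inv, ← Nat.cast_add_one, norm_natCast]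
    gcongr
    simp
  refine summable_of_isBigO_nat
    (Real.summable_nat_rpow.2 (by linarith : -1 + -(c - a - b).re < -1)) ?_
  refine (hinv.mul (isBigO_succ_mul_hypCoeff_succ a b hc)).congr' ?_ ?_
  · exact .of_forall fun n => inv_mul_cancel_left₀ n.cast_add_one_ne_zero _
  · filter_upwards [eventually_gt_atTop 0] with n hn
    rw [Real.rpow_add (Nat.cast_pos.2 hn), Real.rpow_neg_one]

lemma tendsto_natCast_mul_hypCoeff (hc : ∀ k : ℕ, c ≠ -k) (h : 0 < (c - a - b).re) :
    Tendsto (fun n : ℕ => n * hypCoeff a b c n) atTop (𝓝 0) := by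
  rw [← tendsto_add_atTop_iff_nat 1]
  simpa using (isBigO_succ_mul_hypCoeff_succ a b hc).trans_tendsto
    ((tendsto_rpow_neg_atTop h).comp tendsto_natCast_atTop_atTop)

-- The difference of the two sides telescopes: its `n`-th term is `n Aₙ - (n + 1) Aₙ₊₁`.
lemma tsum_hypCoeff_eq_mul_tsum_add_one (hc : ∀ k : ℕ, c ≠ -k) (h : 0 < (c - a - b).re) :
    ∑' n, hypCoeff a b c n =
      (c - a) * (c - b) / (c * (c - a - b)) * ∑' n, hypCoeff a b (c + 1) n := by
  have hc₀ : c ≠ 0 := by simpa using hc 0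
  have hcab : c - a - b ≠ 0 := by simpa using ne_neg_natCast_of_re_pos h 0
  have hc₁ : ∀ k : ℕ, c + 1 ≠ -k := by simpa using add_natCast_ne_neg_natCast hc 1
  have h₁ : 0 < (c + 1 - a - b).re := by
    simp only [sub_re, add_re, one_re] at h ⊢
    linarith
  have hterm (n : ℕ) : n * hypCoeff a b c n - (n + 1 : ℕ) * hypCoeff a b c (n + 1) =
      (c - a - b) * hypCoeff a b c n - (c - a) * (c - b) / c * hypCoeff a b (c + 1) n := by
    have hcn := add_natCast_ne_zero hc n
    rw [Nat.cast_add_one, hypCoeff_succ hc, hypCoeff_add_one_right hc]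
    field_simp
    ring
  have hsum := ((summable_hypCoeff hc h).hasSum.mul_left (c - a - b)).sub
    ((summable_hypCoeff hc₁ h₁).hasSum.mul_left ((c - a) * (c - b) / c))
  have hzero : Tendsto (fun N => ∑ n ∈ Finset.range N, ((c - a - b) * hypCoeff a b c n -
      (c - a) * (c - b) / c * hypCoeff a b (c + 1) n)) atTop (𝓝 0) := by
    simp only [← hterm, Finset.sum_range_sub']
    simpa using (tendsto_natCast_mul_hypCoeff hc h).neg
  have hdiff := tendsto_nhds_unique hsum.tendsto_sum_nat hzero
  field_simp at hdiff ⊢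
  linear_combination hdiff

lemma tsum_hypCoeff_eq_mul_tsum_add_natCast (hc : ∀ k : ℕ, c ≠ -k) (h : 0 < (c - a - b).re)
    (N : ℕ) :
    ∑' n, hypCoeff a b c n =
      poch (c - a) N * poch (c - b) N / (poch c N * poch (c - a - b) N) *
        ∑' n, hypCoeff a b (c + N) n := by
  induction N with
  | zero => simp [poch_zero]
  | succ N ih =>
    have hN : 0 < (c + N - a - b).re := by
      simp only [sub_re, add_re, natCast_re] at h ⊢
      linarith [N.cast_nonneg (α := ℝ)]
    rw [ih, tsum_hypCoeff_eq_mul_tsum_add_one (add_natCast_ne_neg_natCast hc N) hN, ← mul_assoc]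
    simp only [poch_succ]
    push_cast
    rw [← add_assoc, div_mul_div_comm]
    congr 2 <;> ring

lemma tendsto_inv_poch_add_natCast (c : ℂ) (n : ℕ) :
    Tendsto (fun N : ℕ => (poch (c + N) n)⁻¹) atTop (𝓝 (if n = 0 then 1 else 0)) := by
  have hinv (k : ℕ) : Tendsto (fun N : ℕ => (c + N + k)⁻¹) atTop (𝓝 0) := by
    simpa [add_right_comm] using
      tendsto_add_mul_div_add_mul_atTop_nhds (1 : ℂ) (c + k) 0 one_ne_zero
  induction n with
  | zero => simp [poch_zero]
  | succ n ih =>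
    simp only [poch_succ, mul_inv]
    simpa using ih.mul (hinv n)

lemma norm_hypCoeff_add_natCast_le (hc : 0 < c.re) (N n : ℕ) :
    ‖hypCoeff a b (c + N) n‖ ≤ ‖hypCoeff a b c n‖ := by
  have hfactor (k : ℕ) : ‖c + k‖ ≤ ‖c + N + k‖ := by
    simp only [norm_def, normSq_apply, add_re, add_im, natCast_re, natCast_im, add_zero]
    gcongr <;> simp
  have hpoch : ‖poch c n‖ ≤ ‖poch (c + N) n‖ := by
    simp only [poch_eq_prod_range, norm_prod]
    gcongr
    exact hfactor _
  have hpos : 0 < ‖poch c n‖ := norm_pos_iff.2 (poch_ne_zero (ne_neg_natCast_of_re_pos hc) n)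
  have hfac : 0 < ‖(n.factorial : ℂ)‖ := by simp [Nat.factorial_pos]
  simp only [hypCoeff, norm_div, norm_mul]
  gcongr

lemma tendsto_tsum_hypCoeff_add_natCast_of_re_pos (hc : 0 < c.re) (h : 0 < (c - a - b).re) :
    Tendsto (fun N : ℕ => ∑' n, hypCoeff a b (c + N) n) atTop (𝓝 1) := by
  have hterm (n : ℕ) : Tendsto (fun N : ℕ => hypCoeff a b (c + N) n) atTop
      (𝓝 (if n = 0 then 1 else 0)) := by
    convert! (tendsto_inv_poch_add_natCast c n).const_mul (poch a n * poch b n / n.factorial)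
      using 2
    · rw [hypCoeff]
      field_simp
    · split_ifs with hn <;> simp [hn, poch_zero]
  rw [← tsum_ite_eq (0 : ℕ) (fun _ => (1 : ℂ))]
  exact tendsto_tsum_of_dominated_convergence
    (summable_hypCoeff (ne_neg_natCast_of_re_pos hc) h).norm hterm
    (.of_forall fun N n => norm_hypCoeff_add_natCast_le hc N n)

lemma tendsto_tsum_hypCoeff_add_natCast (a b c : ℂ) :
    Tendsto (fun N : ℕ => ∑' n, hypCoeff a b (c + N) n) atTop (𝓝 1) := by
  obtain ⟨M, hM⟩ := exists_nat_gt (max (-c.re) (-(c - a - b).re))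
  obtain ⟨hc, hcab⟩ := max_lt_iff.1 hM
  rw [← tendsto_add_atTop_iff_nat M]
  simpa only [Nat.cast_add, add_assoc, add_comm, add_left_comm] using
    tendsto_tsum_hypCoeff_add_natCast_of_re_pos (a := a) (b := b) (c := c + M)
      (by simpa using neg_lt_iff_pos_add'.1 hc)
      (by simp only [sub_re, add_re, natCast_re] at hcab ⊢; linarith)

lemma tendsto_poch_quotient_gaussValue (hc : ∀ k : ℕ, c ≠ -k) (h : ∀ k : ℕ, c - a - b ≠ -k) :
    Tendsto (fun N => poch (c - a) N * poch (c - b) N / (poch c N * poch (c - a - b) N)) atTop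
      (𝓝 (gaussValue a b c)) := by
  have hlim := ((tendsto_poch_div_cpow_mul_factorial (c - a)).mul
    (tendsto_poch_div_cpow_mul_factorial (c - b))).div
    ((tendsto_poch_div_cpow_mul_factorial c).mul
      (tendsto_poch_div_cpow_mul_factorial (c - a - b)))
    (mul_ne_zero (inv_ne_zero (Gamma_ne_zero hc)) (inv_ne_zero (Gamma_ne_zero h)))
  rw [← mul_inv, ← mul_inv, inv_div_inv] at hlim
  rw [← tendsto_add_atTop_iff_nat 1]
  refine hlim.congr' ?_
  filter_upwards [eventually_ne_atTop 0] with n hn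
  have hn₀ : (n : ℂ) ≠ 0 := Nat.cast_ne_zero.2 hn
  have hpow (x : ℂ) : (n : ℂ) ^ x ≠ 0 := by simp [cpow_eq_zero_iff, hn₀]
  have ha := hpow a
  have hb := hpow b
  have hc' := hpow c
  have hfac : (n.factorial : ℂ) ≠ 0 := Nat.cast_ne_zero.2 n.factorial_ne_zero
  rw [Pi.div_apply]
  simp only [cpow_sub _ _ hn₀]
  field_simp

/-- Gauss's summation theorem. -/
theorem hasSum_hypCoeff (hc : ∀ k : ℕ, c ≠ -k) (h : 0 < (c - a - b).re) :
    HasSum (hypCoeff a b c) (gaussValue a b c) := by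
  have hlim := (tendsto_poch_quotient_gaussValue hc (ne_neg_natCast_of_re_pos h)).mul
    (tendsto_tsum_hypCoeff_add_natCast a b c)
  simp only [← tsum_hypCoeff_eq_mul_tsum_add_natCast hc h, mul_one] at hlim
  rw [← tendsto_nhds_unique tendsto_const_nhds hlim]
  exact (summable_hypCoeff hc h).hasSum

lemma gaussValue_add_one (hc : c ≠ 0) (h : c - a - b - 1 ≠ 0) :
    gaussValue (a + 1) (b + 1) (c + 1) = c / (c - a - b - 1) * gaussValue a b c := by
  have hΓ : Gamma (c - a - b) = (c - a - b - 1) * Gamma (c - a - b - 1) := by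
    rw [← Gamma_add_one _ h, sub_add_cancel]
  simp only [gaussValue, Gamma_add_one c hc, hΓ, add_sub_add_right_eq_sub]
  rw [← sub_sub (c - a)]
  field_simp

theorem hasSum_descFactorial_mul_hypCoeff (k : ℕ) (hc : ∀ m : ℕ, c ≠ -m)
    (h : k < (c - a - b).re) :
    HasSum (fun n : ℕ => n.descFactorial k * hypCoeff a b c n)
      (poch a k * poch b k / poch (c - a - b - k) k * gaussValue a b c) := by
  induction k generalizing a b c with
  | zero => simpa [poch_zero] using hasSum_hypCoeff hc (by simpa using h)
  | succ k ih =>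
    have hc₀ : c ≠ 0 := by simpa using hc 0
    have hcab : c - a - b - 1 ≠ 0 := by
      refine fun h₀ => ?_
      simp only [sub_eq_zero.1 h₀, Nat.cast_add_one, one_re] at h
      linarith [k.cast_nonneg (α := ℝ)]
    have hshift : c + 1 - (a + 1) - (b + 1) = c - a - b - 1 := by ring
    have hsum := (ih (a := a + 1) (b := b + 1) (c := c + 1)
      (by simpa using add_natCast_ne_neg_natCast hc 1)
      (by rw [hshift, sub_re, one_re, lt_sub_iff_add_lt]; exact_mod_cast h)).mul_left (a * b / c)
    rw [← hasSum_nat_add_iff' 1]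
    convert! hsum using 1
    · ext n
      rw [Nat.succ_descFactorial_succ, mul_left_comm, ← succ_mul_hypCoeff_succ]
      push_cast
      ring
    · have hlast : c - a - b - (k + 1 : ℕ) = c - a - b - 1 - k := by push_cast; ring
      rw [hshift, gaussValue_add_one hc₀ hcab, poch_succ_left a, poch_succ_left b, hlast,
        poch_succ (c - a - b - 1 - k), sub_add_cancel]
      simp only [Finset.sum_range_one, Nat.zero_descFactorial_succ, Nat.cast_zero, zero_mul,
        sub_zero]
      field_simp

theorem hasSum_weight_mul_hypCoeff (hc : ∀ m : ℕ, c ≠ -m) (h : 2 < (c - a - b).re) :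
    HasSum (fun n : ℕ => ((n + 1) * (2 * (n + 1) - 1) : ℂ) * hypCoeff a b c n)
      (gaussValue a b c * (2 * poch a 2 * poch b 2 / poch (c - a - b - 2) 2 +
        5 * a * b / (c - a - b - 1) + 1)) := by
  have h₀ := hasSum_descFactorial_mul_hypCoeff 0 hc (by push_cast; linarith)
  have h₁ := hasSum_descFactorial_mul_hypCoeff 1 hc (by push_cast; linarith)
  have h₂ := hasSum_descFactorial_mul_hypCoeff 2 hc (by exact_mod_cast h)
  convert! ((h₂.mul_left 2).add (h₁.mul_left 5)).add h₀ using 1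
  · ext n
    rw [Nat.cast_descFactorial_two, Nat.descFactorial_one, Nat.descFactorial_zero]
    push_cast
    ring
  · simp only [poch_zero, poch_succ _ 0, Nat.cast_zero, Nat.cast_one, Nat.cast_ofNat, add_zero,
      one_mul]
    ring

section Nonneg

open scoped ComplexOrder

lemma poch_mul_poch_nonneg (h : ∀ k : ℕ, 0 ≤ (a + k) * (b + k)) (n : ℕ) :
    0 ≤ poch a n * poch b n := by
  rw [poch_eq_prod_range, poch_eq_prod_range, ← Finset.prod_mul_distrib]
  exact Finset.prod_nonneg fun k _ => h k

lemma poch_nonneg (hc : 0 ≤ c) (n : ℕ) : 0 ≤ poch c n := by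
  rw [poch_eq_prod_range]
  exact Finset.prod_nonneg fun k _ => by positivity

lemma hypCoeff_nonneg (h : ∀ k : ℕ, 0 ≤ (a + k) * (b + k)) (hc : 0 ≤ c) (n : ℕ) :
    0 ≤ hypCoeff a b c n :=
  div_nonneg (poch_mul_poch_nonneg h n) (mul_nonneg (poch_nonneg hc n) (Nat.cast_nonneg _))

lemma bc1_eq_mul_hypCoeff (a b c α : ℂ) (n : ℕ) :
    bc1 a b c α n = α / 2 * hypCoeff a b c n :=
  mul_div_assoc _ _ _

lemma norm_bc1 (h : ∀ k : ℕ, 0 ≤ (a + k) * (b + k)) (hc : 0 ≤ c) (α : ℂ) (n : ℕ) :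
    (‖bc1 a b c α n‖ : ℂ) = ‖α‖ / 2 * hypCoeff a b c n := by
  rw [bc1_eq_mul_hypCoeff, norm_mul, ofReal_mul, norm_of_nonneg' (hypCoeff_nonneg h hc n)]
  simp

theorem hasSum_weight_mul_norm_bc1 (h : ∀ k : ℕ, 0 ≤ (a + k) * (b + k)) (hc : 0 < c)
    (hcab : 2 < (c - a - b).re) (α : ℂ) :
    HasSum (fun n : ℕ => ((n + 1) * (2 * (n + 1) - 1) : ℝ) * ‖bc1 a b c α n‖)
      ((‖α‖ * gaussValue a b c * (2 * poch a 2 * poch b 2 / poch (c - a - b - 2) 2 +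
        5 * a * b / (c - a - b - 1) + 1)).re / 2) := by
  have hsum := (hasSum_weight_mul_hypCoeff
    (ne_neg_natCast_of_re_pos (pos_iff.1 hc).1) hcab).mul_left (‖α‖ / 2 : ℂ)
  convert! hasSum_re hsum using 1
  · ext n
    rw [mul_left_comm, ← norm_bc1 h hc.le]
    exact_mod_cast (ofReal_re _).symm
  · rw [← div_ofNat_re]
    congr 1
    ring

lemma add_natCast_mul_add_natCast_nonneg
    (hab : (∃ a' b' : ℝ, a = (a' : ℂ) ∧ b = (b' : ℂ) ∧ -1 < a' ∧ -1 < b' ∧ 0 < a' * b') ∨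
      b = conj a) (k : ℕ) :
    0 ≤ (a + k) * (b + k) := by
  obtain ⟨x, y, rfl, rfl, hx, hy, hxy⟩ | rfl := hab
  · norm_cast
    obtain rfl | hk := k.eq_zero_or_pos
    · simpa using hxy.le
    · have hk₁ : (1 : ℝ) ≤ k := mod_cast hk
      exact mul_nonneg (by linarith) (by linarith)
  · have hconj : conj a + k = conj (a + k) := by simp
    rw [hconj, mul_conj, zero_le_real]
    exact normSq_nonneg _

end Nonneg

end GaussSummation

section PowerSeries

variable {ι 𝕜 : Type*} [RCLike 𝕜] {f : ι → 𝕜} {z : 𝕜}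

lemma norm_mul_pow_le_of_mem_ball (x : 𝕜) (hz : z ∈ ball (0 : 𝕜) 1) (n : ℕ) :
    ‖x * z ^ n‖ ≤ ‖x‖ := by
  rw [norm_mul, norm_pow]
  exact mul_le_of_le_one_right (norm_nonneg x)
    (pow_le_one₀ (norm_nonneg z) (mem_ball_zero_iff.1 hz).le)

lemma norm_tsum_mul_pow_le (hf : Summable f) (e : ι → ℕ) (hz : z ∈ ball (0 : 𝕜) 1) :
    ‖∑' i, f i * z ^ e i‖ ≤ ∑' i, ‖f i‖ :=
  tsum_of_norm_bounded hf.norm.hasSum fun _ => norm_mul_pow_le_of_mem_ball _ hz _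

lemma hasDerivAt_tsum_mul_pow {e : ι → ℕ} (hf : Summable f)
    (hf' : Summable fun i => f i * e i) (hz : z ∈ ball (0 : 𝕜) 1) :
    HasDerivAt (fun z => ∑' i, f i * z ^ e i) (∑' i, f i * e i * z ^ (e i - 1)) z := by
  have h₀ : (0 : 𝕜) ∈ ball (0 : 𝕜) 1 := mem_ball_self one_pos
  refine hasDerivAt_tsum_of_isPreconnected (g := fun i z => f i * z ^ e i)
    (g' := fun i z => f i * e i * z ^ (e i - 1)) hf'.norm isOpen_ball Metric.isPreconnected_ball
    (fun i y _ => ?_) (fun i y hy => norm_mul_pow_le_of_mem_ball _ hy _) h₀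
    (.of_norm_bounded hf.norm fun i => norm_mul_pow_le_of_mem_ball _ h₀ _) hz
  simpa only [mul_assoc] using (hasDerivAt_pow (e i) y).const_mul (f i)

lemma deriv_deriv_tsum_mul_pow {e : ι → ℕ} (hf : Summable f)
    (hf' : Summable fun i => f i * e i) (hf'' : Summable fun i => f i * e i * (e i - 1 : ℕ))
    (hz : z ∈ ball (0 : 𝕜) 1) :
    deriv (deriv fun z => ∑' i, f i * z ^ e i) z =
      ∑' i, f i * e i * (e i - 1 : ℕ) * z ^ (e i - 1 - 1) := by
  rw [← (hasDerivAt_tsum_mul_pow hf' hf'' hz).deriv]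
  refine EventuallyEq.deriv_eq ?_
  filter_upwards [isOpen_ball.mem_nhds hz] with y hy
  exact (hasDerivAt_tsum_mul_pow hf hf' hy).deriv

end PowerSeries

section UniformConvexity

lemma re_div_nonneg_of_norm_sub_le_norm_add {x y : ℂ} (h : ‖x - y‖ ≤ ‖x + y‖) :
    0 ≤ (x / y).re := by
  have hsq := pow_le_pow_left₀ (norm_nonneg _) h 2
  simp only [← normSq_eq_norm_sq, normSq_sub, normSq_add] at hsq
  rw [div_eq_mul_inv, inv_def, ← mul_assoc, re_mul_ofReal]
  exact mul_nonneg (by linarith) (inv_nonneg.2 (normSq_nonneg y))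

theorem uniformlyConvexOnDisk_of_norm_deriv_le {h g : ℂ → ℂ}
    (H : ∀ z ∈ ball (0 : ℂ) 1,
      ‖deriv g z‖ + 2 * (‖deriv (deriv h) z‖ + ‖deriv (deriv g) z‖) ≤ ‖deriv h z‖) :
    UniformlyConvexOnDisk h g := by
  intro z hz ζ hζ _
  refine re_div_nonneg_of_norm_sub_le_norm_add ?_
  have hw : ‖z - ζ‖ ≤ 2 := by
    linarith [norm_sub_le z ζ, mem_ball_zero_iff.1 hz, mem_ball_zero_iff.1 hζ]
  have hH := H z hz
  generalize z - ζ = w at *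
  generalize deriv h z = h₁ at *
  generalize deriv (deriv h) z = h₂ at *
  generalize deriv g z = g₁ at *
  generalize deriv (deriv g) z = g₂ at *
  set r := w ^ 2 * h₂ + conj (w ^ 2 * g₂) with hr_def
  have hr : ‖r‖ ≤ ‖w‖ * (2 * (‖h₂‖ + ‖g₂‖)) := calc
    ‖r‖ ≤ ‖w‖ ^ 2 * ‖h₂‖ + ‖w‖ ^ 2 * ‖g₂‖ :=
      (norm_add_le _ _).trans_eq (by simp only [norm_mul, norm_pow, norm_conj])
    _ = ‖w‖ * (‖w‖ * (‖h₂‖ + ‖g₂‖)) := by ring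
    _ ≤ ‖w‖ * (2 * (‖h₂‖ + ‖g₂‖)) := by gcongr
  calc
    _ = ‖2 * conj (w * g₁) + r‖ := by rw [hr_def]; congr 1; ring
    _ ≤ 2 * (‖w‖ * ‖g₁‖) + ‖r‖ := by
      simpa only [norm_mul, norm_conj, norm_ofNat] using norm_add_le (2 * conj (w * g₁)) r
    _ ≤ 2 * (‖w‖ * ‖h₁‖) - ‖r‖ := by
      linarith [mul_le_mul_of_nonneg_left hH (norm_nonneg w)]
    _ ≤ ‖2 * (w * h₁) + r‖ := by
      simpa only [norm_mul, norm_ofNat] using norm_sub_le_norm_add (2 * (w * h₁)) r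
    _ = _ := by rw [hr_def]; congr 1; ring

theorem uniformlyConvexOnDisk_id_tsum {f : ℕ → ℂ}
    (hf : Summable fun n : ℕ => ((n + 1) * (2 * (n + 1) - 1) : ℝ) * ‖f n‖)
    (hle : ∑' n : ℕ, ((n + 1) * (2 * (n + 1) - 1) : ℝ) * ‖f n‖ ≤ 1) :
    UniformlyConvexOnDisk (fun z => z) fun z => ∑' n, f n * z ^ (n + 1) := by
  have hweight (n : ℕ) : ((n + 1) * (2 * (n + 1) - 1) : ℝ) * ‖f n‖ =
      ‖f n * (n + 1 : ℕ)‖ + 2 * ‖f n * (n + 1 : ℕ) * (n + 1 - 1 : ℕ)‖ := by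
    simp only [norm_mul, norm_natCast, Nat.add_sub_cancel]
    push_cast
    ring
  simp only [hweight] at hf hle
  have hf₁ : Summable fun n : ℕ => f n * (n + 1 : ℕ) :=
    .of_norm_bounded hf fun n => le_add_of_nonneg_right (by positivity)
  have hf₂ : Summable fun n : ℕ => f n * (n + 1 : ℕ) * (n + 1 - 1 : ℕ) :=
    .of_norm_bounded hf fun n => by
      linarith [norm_nonneg (f n * (n + 1 : ℕ)), norm_nonneg (f n * (n + 1 : ℕ) * (n + 1 - 1 : ℕ))]
  have hf₀ : Summable f := .of_norm_bounded hf₁.norm fun n => by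
    rw [norm_mul, norm_natCast]
    exact le_mul_of_one_le_right (norm_nonneg _) (by simp)
  refine uniformlyConvexOnDisk_of_norm_deriv_le fun z hz => ?_
  rw [deriv_id'', deriv_const, norm_zero, norm_one, zero_add,
    deriv_deriv_tsum_mul_pow hf₀ hf₁ hf₂ hz, (hasDerivAt_tsum_mul_pow hf₀ hf₁ hz).deriv]
  refine le_trans ?_ hle
  rw [hf₁.norm.tsum_add (hf₂.norm.mul_left 2), tsum_mul_left]
  gcongr
  · exact norm_tsum_mul_pow_le hf₁ _ hz
  · exact norm_tsum_mul_pow_le hf₂ _ hz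

end UniformConvexity

lemma mul_hypF_eq_tsum_bc1 (a b c α z : ℂ) :
    α / 2 * z * hypF a b c z = ∑' n, bc1 a b c α n * z ^ (n + 1) := by
  rw [hypF, ← tsum_mul_left]
  refine tsum_congr fun n => ?_
  rw [bc1]
  ring

open scoped ComplexOrder in
theorem hypergeom_uniformly_convex_a_general (a b : ℂ) (hab : ∀ k : ℕ, 0 ≤ (a + k) * (b + k))
    (c : ℝ) (hc : 0 < c) (hc1 : (a + b).re + 2 < c) (α : ℂ)
    (hQ : (‖α‖ * gaussValue a b c * (2 * poch a 2 * poch b 2 / poch (c - a - b - 2) 2 +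
      5 * a * b / (c - a - b - 1) + 1)).re ≤ 2) :
    (Summable fun n : ℕ => ((n + 1) * (2 * (n + 1) - 1) : ℝ) * ‖bc1 a b c α n‖) ∧
    ∑' n : ℕ, ((n + 1) * (2 * (n + 1) - 1) : ℝ) * ‖bc1 a b c α n‖ ≤ 1 ∧
    UniformlyConvexOnDisk (fun z => z) fun z => α / 2 * z * hypF a b c z := by
  have hsum := hasSum_weight_mul_norm_bc1 hab (zero_lt_real.2 hc)
    (by simp only [sub_re, add_re, ofReal_re] at hc1 ⊢; linarith) α
  have hle : ∑' n : ℕ, ((n + 1) * (2 * (n + 1) - 1) : ℝ) * ‖bc1 a b c α n‖ ≤ 1 := by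
    rw [hsum.tsum_eq, div_le_one two_pos]
    exact hQ
  refine ⟨hsum.summable, hle, ?_⟩
  simp only [mul_hypF_eq_tsum_bc1]
  exact uniformlyConvexOnDisk_id_tsum hsum.summable hle

/-- Theorem 6(a): under the stated conditions on `a, b, c, α`, the
coefficients of `g₁(z) = (α/2) z F(a,b;c;z)` satisfy `∑_{n≥1} n(2n-1)|bₙ| ≤ 1`;
consequently `f₁(z) = z + conj(g₁(z))` is uniformly convex in `𝔻`. -/
theorem hypergeom_uniformly_convex_a (a b : ℂ)
    (hab : (∃ a' b' : ℝ, a = (a' : ℂ) ∧ b = (b' : ℂ) ∧ -1 < a' ∧ -1 < b' ∧ 0 < a' * b') ∨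
           (a ≠ 0 ∧ b ≠ 0 ∧ b = conj a))
    (c : ℝ) (hc : 0 < c) (hc1 : (a + b).re + 2 < c)
    (α : ℂ) (hα : ‖α‖ < 1)
    (hQ : ∃ q : ℝ, 0 < q ∧ q ≤ 2 ∧
      (q : ℂ) = (‖α‖ : ℂ) * (Complex.Gamma (c : ℂ) * Complex.Gamma ((c : ℂ) - a - b)
          / (Complex.Gamma ((c : ℂ) - a) * Complex.Gamma ((c : ℂ) - b)))
        * (2 * poch a 2 * poch b 2 / poch ((c : ℂ) - a - b - 2) 2
          + 5 * a * b / ((c : ℂ) - a - b - 1) + 1)) :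
    (Summable fun n : ℕ =>
      (((n + 1) * (2 * (n + 1) - 1) : ℝ)) * ‖bc1 a b (c : ℂ) α n‖) ∧
    (∑' n : ℕ, (((n + 1) * (2 * (n + 1) - 1) : ℝ)) * ‖bc1 a b (c : ℂ) α n‖) ≤ 1 ∧
    UniformlyConvexOnDisk (fun z => z) (fun z => α / 2 * z * hypF a b (c : ℂ) z) := by
  obtain ⟨q, -, hq2, hq⟩ := hQ
  exact hypergeom_uniformly_convex_a_general a b
    (add_natCast_mul_add_natCast_nonneg (hab.imp_right fun h => h.2.2)) c hc hc1 α
    (by rwa [gaussValue, ← hq, ofReal_re])
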